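/- For all natural numbers n, the triple sum over integers i, j, k of binom(2n, n+i) * binom(2n, n+j) * binom(2n, n+k) * |(i^2-j^2)(i^2-k^2)(j^2-k^2)| equals 3 * n^3 * (n-1) * binom(2n, n)^2 * 2^(2n-1). -/

import Mathlib

/-- Binomial coefficient `n.choose k` extended to an integer lower index,
vanishing when `k < 0` (and, as usual, when `k > n`). -/
def ichoose (n : ℕ) (k : ℤ) : ℤ := if 0 ≤ k then (n.choose k.toNat : ℤ) else 0

open Finset in
theorem finsum_even (n : ℕ) (f : ℤ → ℤ) (he : ∀ i, f (-i) = f i)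
    (hz : ∀ i : ℤ, (n : ℤ) < |i| → f i = 0) :
    ∑ᶠ i : ℤ, f i = ∑ m ∈ range (n + 1), (if m = 0 then 1 else 2) * f (m : ℤ) := by
  have h1 : ∑ᶠ i : ℤ, f i = ∑ i ∈ Icc (-(n : ℤ)) n, f i := by
    apply finsum_eq_sum_of_support_subset
    intro i hi
    simp only [coe_Icc, Set.mem_Icc]
    by_contra hcon
    apply hi
    apply hz
    rw [lt_abs]
    omega
  rw [h1]
  clear h1 hz
  induction n with
  | zero => simp
  | succ n ih =>
    have : Icc (-((n + 1 : ℕ) : ℤ)) ((n + 1 : ℕ) : ℤ)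
        = insert (((n + 1 : ℕ) : ℤ)) (insert (-((n + 1 : ℕ) : ℤ)) (Icc (-(n : ℤ)) n)) := by
      ext x
      simp only [mem_insert, mem_Icc]
      push_cast
      omega
    rw [this, sum_insert, sum_insert, ih, sum_range_succ _ (n + 1), he]
    · simp
      ring
    · simp
    · simp only [mem_insert, mem_Icc]
      push_cast
      omega

theorem ichoose_even (n : ℕ) (i : ℤ) :
    ichoose (2 * n) (n + -i) = ichoose (2 * n) (n + i) := by
  unfold ichoose
  by_cases h1 : 0 ≤ (n : ℤ) + i
  · by_cases h2 : 0 ≤ (n : ℤ) + -i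
    · rw [if_pos h1, if_pos h2, Nat.choose_symm_of_eq_add]
      omega
    · rw [if_pos h1, if_neg h2, Nat.choose_eq_zero_of_lt]
      · simp
      · omega
  · rw [if_neg h1]
    split_ifs with h2
    · rw [Nat.choose_eq_zero_of_lt]
      · simp
      · omega
    · rfl

theorem ichoose_out (n : ℕ) (i : ℤ) (h : (n : ℤ) < |i|) :
    ichoose (2 * n) (n + i) = 0 := by
  unfold ichoose
  rw [lt_abs] at h
  split_ifs with h2
  · rw [Nat.choose_eq_zero_of_lt]
    · simp
    · omega
  · rfl

theorem ichoose_nat (n m : ℕ) : ichoose (2 * n) ((n : ℤ) + m) = ((2 * n).choose (n + m) : ℤ) := by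
  unfold ichoose
  rw [if_pos (by omega)]
  norm_cast

/-- Folded binomial weight. -/
def wt (n m : ℕ) : ℚ := (if m = 0 then 1 else 2) * ((2 * n).choose (n + m) : ℚ)

theorem wt_pos (n m : ℕ) : wt n (m + 1) = 2 * ((2 * n).choose (n + (m + 1)) : ℚ) := by
  simp [wt]

theorem ch_rec (n a : ℕ) : ((n : ℚ) + a + 1) * ((2 * n).choose (n + (a + 1)) : ℚ)
    = (n - a) * ((2 * n).choose (n + a) : ℚ) := by
  rcases le_or_gt a n with h | h
  · have := Nat.choose_succ_right_eq (2 * n) (n + a)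
    have h2 : 2 * n - (n + a) = n - a := by omega
    rw [h2] at this
    have h3 := congrArg (Nat.cast : ℕ → ℚ) this
    push_cast [Nat.cast_sub h] at h3
    rw [← add_assoc]
    linarith
  · rw [Nat.choose_eq_zero_of_lt (by omega), Nat.choose_eq_zero_of_lt (by omega)]
    simp

open Finset in
theorem part1 (n a : ℕ) : ∑ b ∈ range (a + 1), wt n b * ((b : ℚ) ^ 2 - n / 2)
    = -(1 / 2) * (2 * a + 1) * (n - a) * ((2 * n).choose (n + a) : ℚ) := by
  induction a with
  | zero => simp [wt]; ring
  | succ a ih =>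
    rw [sum_range_succ, ih, wt_pos]
    have := ch_rec n a
    push_cast
    linear_combination (1 / 2) * (2 * (a : ℚ) + 1) * this

open Finset in
theorem part2 (n a : ℕ) : ∑ b ∈ range (a + 1), wt n b * ((b : ℚ) ^ 4 - n * (3 * n - 1) / 4)
    = (2 * a + 1) * (-(3 * n - 1) / 4 - a * (a + 1) / 2) * (n - a)
      * ((2 * n).choose (n + a) : ℚ) := by
  induction a with
  | zero => simp [wt]; ring
  | succ a ih =>
    rw [sum_range_succ, ih, wt_pos]
    have := ch_rec n a
    push_cast
    linear_combination -(2 * (a : ℚ) + 1) * (-(3 * n - 1) / 4 - a * (a + 1) / 2) * this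

open Finset in
theorem mom0 (n : ℕ) : ∑ b ∈ range (n + 1), wt n b = 2 ^ (2 * n) := by
  have h := Nat.sum_range_choose (2 * n)
  have h2 : 2 * n + 1 = n + (n + 1) := by ring
  rw [h2, sum_range_add, ← sum_range_reflect] at h
  have h3 : ∑ j ∈ range n, (2 * n).choose (n - 1 - j)
      = ∑ j ∈ range n, (2 * n).choose (n + (j + 1)) := by
    apply sum_congr rfl
    intro j hj
    rw [mem_range] at hj
    apply Nat.choose_symm_of_eq_add
    omega
  rw [h3, sum_range_succ'] at h
  rw [sum_range_succ']
  simp only [wt_pos]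
  have h4 := congrArg (Nat.cast : ℕ → ℚ) h
  push_cast at h4
  rw [← h4, ← mul_sum]
  simp [wt]
  ring

open Finset in
theorem mom2 (n : ℕ) : ∑ b ∈ range (n + 1), wt n b * (b : ℚ) ^ 2 = n / 2 * 2 ^ (2 * n) := by
  have h := part1 n n
  simp only [mul_sub, sum_sub_distrib, ← sum_mul, mom0] at h
  linear_combination h

open Finset in
theorem mom4 (n : ℕ) : ∑ b ∈ range (n + 1), wt n b * (b : ℚ) ^ 4
    = n * (3 * n - 1) / 4 * 2 ^ (2 * n) := by
  have h := part2 n n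
  simp only [mul_sub, sum_sub_distrib, ← sum_mul, mom0] at h
  linear_combination h

/-- The kernel of the double sum. -/
def ker (n a b : ℕ) : ℚ := |(a : ℚ) ^ 2 - (b : ℚ) ^ 2| *
  ((a : ℚ) ^ 2 * (b : ℚ) ^ 2 - n / 2 * ((a : ℚ) ^ 2 + (b : ℚ) ^ 2) + n * (3 * n - 1) / 4)

theorem ker_symm (n a b : ℕ) : ker n a b = ker n b a := by
  unfold ker
  rw [abs_sub_comm]
  ring

open Finset in
theorem edge (n a : ℕ) : ∑ b ∈ range (a + 1), wt n b * ker n (a + 1) b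
    = ((2 * n).choose (n + a) : ℚ) * (n - a) * (2 * a + 1) *
      (((a : ℚ) + 1) / 4 * (n - a - 1) * (2 * a + 3)) := by
  have h : ∑ b ∈ range (a + 1), wt n b * ker n (a + 1) b
      = (((a : ℚ) + 1) ^ 4 - n * (3 * n - 1) / 4) *
          ∑ b ∈ range (a + 1), wt n b * ((b : ℚ) ^ 2 - n / 2)
        - (((a : ℚ) + 1) ^ 2 - n / 2) *
          ∑ b ∈ range (a + 1), wt n b * ((b : ℚ) ^ 4 - n * (3 * n - 1) / 4) := by
    rw [mul_sum, mul_sum, ← sum_sub_distrib]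
    apply sum_congr rfl
    intro b hb
    rw [mem_range] at hb
    have hb' : (b : ℚ) ≤ a + 1 := by exact_mod_cast hb.le
    unfold ker
    push_cast
    rw [abs_of_nonneg (sub_nonneg.2 (by gcongr))]
    ring
  rw [h, part1, part2]
  ring

open Finset in
theorem dbl (n N : ℕ) : ((n : ℚ) - 1) *
      ∑ a ∈ range (N + 1), ∑ b ∈ range (N + 1), wt n a * wt n b * ker n a b
    = (n - 1) * (n ^ 3 * (n - 1) * ((2 * n).choose n : ℚ) ^ 2 / 2)
      - ((2 * n).choose (n + N) : ℚ) ^ 2 * (n - N) ^ 2 * (n - N - 1) * (n + N) *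
        ((n - 1) / 2 + N * (N + 1)) := by
  induction N with
  | zero => simp [ker]; ring
  | succ N ih =>
    have h : ∑ a ∈ range (N + 1 + 1), ∑ b ∈ range (N + 1 + 1), wt n a * wt n b * ker n a b
        = ∑ a ∈ range (N + 1), ∑ b ∈ range (N + 1), wt n a * wt n b * ker n a b
          + 2 * wt n (N + 1) * ∑ b ∈ range (N + 1), wt n b * ker n (N + 1) b := by
      rw [sum_range_succ]
      simp only [sum_range_succ _ (N + 1), sum_add_distrib]
      have h0 : ker n (N + 1) (N + 1) = 0 := by simp [ker]
      have h1 : ∑ a ∈ range (N + 1), wt n a * wt n (N + 1) * ker n a (N + 1)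
          = wt n (N + 1) * ∑ b ∈ range (N + 1), wt n b * ker n (N + 1) b := by
        rw [mul_sum]
        apply sum_congr rfl
        intro b _
        rw [ker_symm]
        ring
      have h2 : ∑ b ∈ range (N + 1), wt n (N + 1) * wt n b * ker n (N + 1) b
          = wt n (N + 1) * ∑ b ∈ range (N + 1), wt n b * ker n (N + 1) b := by
        rw [mul_sum]
        apply sum_congr rfl
        intro b _
        ring
      rw [h0, h1, h2]
      ring
    rw [h, mul_add, ih, edge, wt_pos]
    have hr := ch_rec n N
    have hpos : ((n : ℚ) + N + 1) ≠ 0 := by positivity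
    rcases eq_or_ne ((n : ℚ) - N) 0 with hz | hz
    · have : ((2 * n).choose (n + (N + 1)) : ℚ) = 0 := by
        rw [hz, zero_mul] at hr
        exact (mul_eq_zero.1 hr).resolve_left hpos
      rw [this, hz]
      ring
    · have : ((2 * n).choose (n + N) : ℚ)
          = ((n : ℚ) + N + 1) * ((2 * n).choose (n + (N + 1)) : ℚ) / (n - N) := by
        field_simp
        linarith
      rw [this]
      push_cast
      field_simp
      ring

open Finset in
theorem dbl_final (n : ℕ) (hn : 1 ≤ n) :
    ∑ a ∈ range (n + 1), ∑ b ∈ range (n + 1), wt n a * wt n b * ker n a b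
    = n ^ 3 * (n - 1) * ((2 * n).choose n : ℚ) ^ 2 / 2 := by
  rcases eq_or_lt_of_le hn with h | h
  · subst h
    norm_num [sum_range_succ, ker, wt]
  · have h1 : ((n : ℚ) - 1) ≠ 0 := by
      have : (1 : ℚ) < n := by exact_mod_cast h
      linarith
    apply mul_left_cancel₀ h1
    rw [dbl]
    ring

theorem abs_vand (x y z : ℚ) : |(x - y) * (x - z) * (y - z)|
    = |x - y| * ((x - z) * (y - z)) + |x - z| * ((x - y) * (z - y))
      + |y - z| * ((y - x) * (z - x)) := by
  rw [abs_mul, abs_mul]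
  rcases abs_cases (x - y) with ⟨h1, _⟩ | ⟨h1, _⟩ <;>
  rcases abs_cases (x - z) with ⟨h2, _⟩ | ⟨h2, _⟩ <;>
  rcases abs_cases (y - z) with ⟨h3, _⟩ | ⟨h3, _⟩ <;>
  rw [h1, h2, h3] <;> first
    | ring1
    | (exfalso; linarith)

open Finset in
theorem triple (n : ℕ) (hn : 1 ≤ n) :
    ∑ i ∈ range (n + 1), ∑ j ∈ range (n + 1), ∑ k ∈ range (n + 1),
      wt n i * wt n j * wt n k * |((i : ℚ) ^ 2 - (j : ℚ) ^ 2) * ((i : ℚ) ^ 2 - (k : ℚ) ^ 2)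
        * ((j : ℚ) ^ 2 - (k : ℚ) ^ 2)|
    = 3 * (2 ^ (2 * n) * (n ^ 3 * (n - 1) * ((2 * n).choose n : ℚ) ^ 2 / 2)) := by
  set g : ℕ → ℕ → ℕ → ℚ := fun i j k => wt n i * wt n j * wt n k *
    (|(i : ℚ) ^ 2 - (j : ℚ) ^ 2| * (((i : ℚ) ^ 2 - (k : ℚ) ^ 2) * ((j : ℚ) ^ 2 - (k : ℚ) ^ 2)))
    with hg
  have h1 : ∑ i ∈ range (n + 1), ∑ j ∈ range (n + 1), ∑ k ∈ range (n + 1), g i j k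
      = 2 ^ (2 * n) * (n ^ 3 * (n - 1) * ((2 * n).choose n : ℚ) ^ 2 / 2) := by
    rw [← dbl_final n hn, mul_sum]
    refine sum_congr rfl fun i _ => ?_
    rw [mul_sum]
    refine sum_congr rfl fun j _ => ?_
    have : ∑ k ∈ range (n + 1), g i j k = wt n i * wt n j * |(i : ℚ) ^ 2 - (j : ℚ) ^ 2| *
        ((i : ℚ) ^ 2 * (j : ℚ) ^ 2 * ∑ k ∈ range (n + 1), wt n k
          - ((i : ℚ) ^ 2 + (j : ℚ) ^ 2) * ∑ k ∈ range (n + 1), wt n k * (k : ℚ) ^ 2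
          + ∑ k ∈ range (n + 1), wt n k * (k : ℚ) ^ 4) := by
      rw [mul_sum, mul_sum, ← sum_sub_distrib, ← sum_add_distrib, mul_sum]
      refine sum_congr rfl fun k _ => ?_
      simp only [hg]
      ring
    rw [this, mom0, mom2, mom4, ker]
    ring
  have h2 : ∑ i ∈ range (n + 1), ∑ j ∈ range (n + 1), ∑ k ∈ range (n + 1), g i k j
      = ∑ i ∈ range (n + 1), ∑ j ∈ range (n + 1), ∑ k ∈ range (n + 1), g i j k :=
    sum_congr rfl fun i _ => sum_comm
  have h3 : ∑ i ∈ range (n + 1), ∑ j ∈ range (n + 1), ∑ k ∈ range (n + 1), g j k i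
      = ∑ i ∈ range (n + 1), ∑ j ∈ range (n + 1), ∑ k ∈ range (n + 1), g i j k := by
    rw [sum_comm]
    exact sum_congr rfl fun i _ => sum_comm
  have h4 : ∑ i ∈ range (n + 1), ∑ j ∈ range (n + 1), ∑ k ∈ range (n + 1),
      wt n i * wt n j * wt n k * |((i : ℚ) ^ 2 - (j : ℚ) ^ 2) * ((i : ℚ) ^ 2 - (k : ℚ) ^ 2)
        * ((j : ℚ) ^ 2 - (k : ℚ) ^ 2)|
      = ∑ i ∈ range (n + 1), ∑ j ∈ range (n + 1), ∑ k ∈ range (n + 1),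
        (g i j k + g i k j + g j k i) := by
    refine sum_congr rfl fun i _ => sum_congr rfl fun j _ => sum_congr rfl fun k _ => ?_
    rw [abs_vand]
    simp only [hg]
    ring
  rw [h4]
  simp only [sum_add_distrib]
  rw [h2, h3, h1]
  ring

theorem stmt11 (n : ℕ) (hn : 1 ≤ n) :
    ∑ᶠ i : ℤ, ∑ᶠ j : ℤ, ∑ᶠ k : ℤ,
        ichoose (2 * n) (n + i) * ichoose (2 * n) (n + j) * ichoose (2 * n) (n + k)
          * |(i ^ 2 - j ^ 2) * (i ^ 2 - k ^ 2) * (j ^ 2 - k ^ 2)|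
      = 3 * n ^ 3 * ((n : ℤ) - 1) * ((2 * n).choose n : ℤ) ^ 2 * 2 ^ (2 * n - 1) := by
  rw [finsum_even n _ (by intro i; simp only [ichoose_even, neg_sq])
    (by intro i hi; simp [ichoose_out n i hi])]
  have e2 : ∀ i : ℤ, ∑ᶠ j : ℤ, ∑ᶠ k : ℤ,
        ichoose (2 * n) (n + i) * ichoose (2 * n) (n + j) * ichoose (2 * n) (n + k)
          * |(i ^ 2 - j ^ 2) * (i ^ 2 - k ^ 2) * (j ^ 2 - k ^ 2)| = _ := fun i =>
    finsum_even n _ (by intro i; simp only [ichoose_even, neg_sq])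
      (by intro i hi; simp [ichoose_out n i hi])
  have e3 : ∀ i j : ℤ, ∑ᶠ k : ℤ,
        ichoose (2 * n) (n + i) * ichoose (2 * n) (n + j) * ichoose (2 * n) (n + k)
          * |(i ^ 2 - j ^ 2) * (i ^ 2 - k ^ 2) * (j ^ 2 - k ^ 2)| = _ := fun i j =>
    finsum_even n _ (by intro i; simp only [ichoose_even, neg_sq])
      (by intro i hi; simp [ichoose_out n i hi])
  simp only [e2]
  simp only [e3]
  simp only [ichoose_nat]
  have h := triple n hn
  have hp : (2 : ℚ) ^ (2 * n) = 2 * 2 ^ (2 * n - 1) := by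
    rw [← pow_succ']
    congr 1
    omega
  rw [hp] at h
  rw [← Int.cast_inj (α := ℚ)]
  push_cast
  refine Eq.trans ?_ (h.trans (by ring))
  refine Finset.sum_congr rfl fun i _ => ?_
  rw [Finset.mul_sum]
  refine Finset.sum_congr rfl fun j _ => ?_
  rw [Finset.mul_sum, Finset.mul_sum]
  refine Finset.sum_congr rfl fun k _ => ?_
  simp only [wt]
  ring
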